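/- Let E be a real Hilbert space, p, n ∈ ℕ, and for each ι ∈ Fin p let f^ι : E → ℝ be convex and differentiable with L-Lipschitz gradient ∇f^ι (L ≥ 0). Let x* ∈ E, let x^ : Fin p → E satisfy ∇f^ι(x^ ι) = 0 for every ι, let I be a finite subset of Fin p, and assume x^ ι = x* for every ι ∉ I. Let γ₀ ≥ 0 and γ : Fin p → ℝ be nonnegative with γ₀ + Σ_ι γ ι = 1, set γ_max := max_ι γ ι and M := max_ι ‖x* − x^ ι‖. Let W : Fin n → Fin n → ℝ be doubly stochastic, α ≥ 0, v : Fin n → E, ε : Fin n → Fin p → E, and define x j := γ₀ • v j + Σ_ι γ ι • (v j − α • (∇f^ι (v j) − ε j ι)) and v' l := Σ_j W l j • x j. Then Σ_l ‖v' l − x*‖² ≤ Σ_j ‖v j − x*‖² + 2α Σ_j Σ_ι γ ι ⟨ε j ι, v j − x*⟩ + 2(1−γ₀) α² Σ_j Σ_ι γ ι ‖ε j ι‖² + 2 α n γ_max |I| L M² + 2 α γ_max |I| L Σ_j (max_ι ‖v j − x^ ι‖²) − 2α Σ_j Σ_ι γ ι (⟨∇f^ι(v j), v j − x^ ι⟩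 − (1−γ₀) α ‖∇f^ι(v j)‖²). -/

import Mathlib

open RealInnerProductSpace

/-- Maximum of a real-valued function over `Fin p` (for `0 < p`). -/
noncomputable def finMax {p : ℕ} (hp : 0 < p) (g : Fin p → ℝ) : ℝ :=
  Finset.univ.sup' (Finset.univ_nonempty_iff.mpr (Fin.pos_iff_nonempty.mp hp)) g

/-!
Averaging with doubly stochastic weights does not increase the total squared distance to `x*`, so
it suffices to bound each gradient step. Expanding the square of a step gives the decoding-error
terms and the descent term `⟪∇f^ι(v j), v j - x*⟫`. Moving the base point of the latter from `x*`
to `x^ ι` costs `⟪∇f^ι(v j), x* - x^ ι⟫`, which vanishes off `I` and on `I` is at most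
`L ‖v j - x^ ι‖ ‖x* - x^ ι‖`, because `∇f^ι` is `L`-Lipschitz and vanishes at `x^ ι`.
-/

theorem le_finMax {p : ℕ} (hp : 0 < p) (g : Fin p → ℝ) (i : Fin p) : g i ≤ finMax hp g :=
  Finset.le_sup' g (Finset.mem_univ i)

section NormedSpace

variable {ι κ E : Type*} [Fintype ι] [SeminormedAddCommGroup E] [NormedSpace ℝ E]

theorem norm_sum_smul_sq_le {w : ι → ℝ} (hw : ∀ i, 0 ≤ w i) (z : ι → E) :
    ‖∑ i, w i • z i‖ ^ 2 ≤ (∑ i, w i) * ∑ i, w i * ‖z i‖ ^ 2 := by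
  have triangle : ‖∑ i, w i • z i‖ ≤ ∑ i, w i * ‖z i‖ :=
    norm_sum_le_of_le _ fun i _ => (norm_smul_of_nonneg (hw i) (z i)).le
  calc ‖∑ i, w i • z i‖ ^ 2 ≤ (∑ i, w i * ‖z i‖) ^ 2 := by gcongr
    _ ≤ (∑ i, w i) * ∑ i, w i * ‖z i‖ ^ 2 :=
      Finset.sum_sq_le_sum_mul_sum_of_sq_le_mul _ (fun i _ => hw i)
        (fun i _ => mul_nonneg (hw i) (sq_nonneg _)) (fun i _ => le_of_eq (by ring))

theorem norm_sum_smul_sub_sq_le {w : ι → ℝ} (hw : ∀ i, 0 ≤ w i) (a b : ι → E) :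
    ‖∑ i, w i • (a i - b i)‖ ^ 2 ≤
      2 * (∑ i, w i) * (∑ i, w i * ‖a i‖ ^ 2 + ∑ i, w i * ‖b i‖ ^ 2) := by
  have norm_sub_sq_le (i : ι) : ‖a i - b i‖ ^ 2 ≤ 2 * (‖a i‖ ^ 2 + ‖b i‖ ^ 2) :=
    (pow_le_pow_left₀ (norm_nonneg _) (norm_sub_le _ _) 2).trans add_sq_le
  calc ‖∑ i, w i • (a i - b i)‖ ^ 2
      ≤ (∑ i, w i) * ∑ i, w i * ‖a i - b i‖ ^ 2 := norm_sum_smul_sq_le hw _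
    _ ≤ (∑ i, w i) * ∑ i, w i * (2 * (‖a i‖ ^ 2 + ‖b i‖ ^ 2)) :=
      mul_le_mul_of_nonneg_left
        (Finset.sum_le_sum fun i _ => mul_le_mul_of_nonneg_left (norm_sub_sq_le i) (hw i))
        (Finset.sum_nonneg fun i _ => hw i)
    _ = 2 * (∑ i, w i) * (∑ i, w i * ‖a i‖ ^ 2 + ∑ i, w i * ‖b i‖ ^ 2) := by
      simp only [mul_left_comm _ (2 : ℝ), mul_add, ← Finset.mul_sum, Finset.sum_add_distrib]
      ring

theorem sum_norm_sum_smul_sq_le [Fintype κ] {W : κ → ι → ℝ} (hW : ∀ l j, 0 ≤ W l j)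
    (hWrow : ∀ l, ∑ j, W l j ≤ 1) (hWcol : ∀ j, ∑ l, W l j ≤ 1) (z : ι → E) :
    ∑ l, ‖∑ j, W l j • z j‖ ^ 2 ≤ ∑ j, ‖z j‖ ^ 2 :=
  calc ∑ l, ‖∑ j, W l j • z j‖ ^ 2
      ≤ ∑ l, ∑ j, W l j * ‖z j‖ ^ 2 := Finset.sum_le_sum fun l _ =>
        (norm_sum_smul_sq_le (hW l) z).trans <| mul_le_of_le_one_left
          (Finset.sum_nonneg fun j _ => mul_nonneg (hW l j) (sq_nonneg _)) (hWrow l)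
    _ = ∑ j, (∑ l, W l j) * ‖z j‖ ^ 2 := by
      rw [Finset.sum_comm]
      simp only [Finset.sum_mul]
    _ ≤ ∑ j, ‖z j‖ ^ 2 := Finset.sum_le_sum fun j _ =>
      mul_le_of_le_one_left (sq_nonneg _) (hWcol j)

theorem sum_norm_sum_smul_sub_sq_le [Fintype κ] {W : κ → ι → ℝ} (hW : ∀ l j, 0 ≤ W l j)
    (hWrow : ∀ l, ∑ j, W l j = 1) (hWcol : ∀ j, ∑ l, W l j ≤ 1) (x : ι → E) (z : E) :
    ∑ l, ‖∑ j, W l j • x j - z‖ ^ 2 ≤ ∑ j, ‖x j - z‖ ^ 2 := by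
  have center (l : κ) : ∑ j, W l j • x j - z = ∑ j, W l j • (x j - z) := by
    simp only [smul_sub, Finset.sum_sub_distrib, ← Finset.sum_smul, hWrow, one_smul]
  simpa only [center] using
    sum_norm_sum_smul_sq_le hW (fun l => (hWrow l).le) hWcol fun j => x j - z

end NormedSpace

theorem smul_add_sum_smul_sub_smul {ι R E : Type*} [Fintype ι] [CommRing R] [AddCommGroup E]
    [Module R E] {w₀ : R} {w : ι → R} (hw : w₀ + ∑ i, w i = 1) (a : R) (u : E) (d : ι → E) :
    w₀ • u + ∑ i, w i • (u - a • d i) = u - a • ∑ i, w i • d i := by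
  simp only [smul_sub, Finset.sum_sub_distrib, ← Finset.sum_smul, smul_comm _ a,
    ← Finset.smul_sum]
  rw [← add_sub_assoc, ← add_smul, hw, one_smul]

section InnerProductSpace

variable {ι E : Type*} [SeminormedAddCommGroup E] [InnerProductSpace ℝ E]

theorem real_inner_le_mul_sq_add_sq {L : ℝ} (hL : 0 ≤ L) {g d y : E} (hg : ‖g‖ ≤ L * ‖d‖) :
    ⟪g, y⟫ ≤ L * (‖y‖ ^ 2 + ‖d‖ ^ 2) :=
  calc ⟪g, y⟫ ≤ ‖g‖ * ‖y‖ := real_inner_le_norm g y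
    _ ≤ L * ‖d‖ * ‖y‖ := by gcongr
    _ = L * (‖d‖ * ‖y‖) := mul_assoc _ _ _
    _ ≤ L * (‖y‖ ^ 2 + ‖d‖ ^ 2) := by
      gcongr
      nlinarith [sq_nonneg (‖d‖ - ‖y‖), sq_nonneg ‖d‖, sq_nonneg ‖y‖]

variable [Fintype ι] {w : ι → ℝ}

theorem norm_sub_smul_sum_smul_sub_sq_le (hw : ∀ i, 0 ≤ w i) (a : ℝ) (u : E) (g e : ι → E) :
    ‖u - a • ∑ i, w i • (g i - e i)‖ ^ 2 ≤
      ‖u‖ ^ 2 + 2 * a * ∑ i, w i * ⟪e i, u⟫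
        + 2 * (∑ i, w i) * a ^ 2 * ∑ i, w i * ‖e i‖ ^ 2
        - 2 * a * ∑ i, w i * (⟪g i, u⟫ - (∑ i, w i) * a * ‖g i‖ ^ 2) := by
  have expand : ‖u - a • ∑ i, w i • (g i - e i)‖ ^ 2 =
      ‖u‖ ^ 2 - 2 * a * (∑ i, w i * ⟪g i, u⟫ - ∑ i, w i * ⟪e i, u⟫)
        + a ^ 2 * ‖∑ i, w i • (g i - e i)‖ ^ 2 := by
    rw [norm_sub_sq_real, norm_smul, mul_pow, Real.norm_eq_abs, sq_abs, real_inner_comm]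
    simp only [sum_inner, real_inner_smul_left, inner_sub_left, mul_sub, Finset.sum_sub_distrib]
    ring
  have descent : ∑ i, w i * (⟪g i, u⟫ - (∑ i, w i) * a * ‖g i‖ ^ 2) =
      ∑ i, w i * ⟪g i, u⟫ - (∑ i, w i) * a * ∑ i, w i * ‖g i‖ ^ 2 := by
    simp only [mul_sub, Finset.sum_sub_distrib, mul_left_comm (w _), ← Finset.mul_sum]
  rw [expand, descent]
  linarith [mul_le_mul_of_nonneg_left (norm_sum_smul_sub_sq_le hw g e) (sq_nonneg a)]

theorem sum_mul_inner_sub_le {L B M D : ℝ} (hL : 0 ≤ L) (hw : ∀ i, 0 ≤ w i) {I : Finset ι}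
    {u z : E} {y g : ι → E} (hy : ∀ i ∉ I, y i = z) (hg : ∀ i ∈ I, ‖g i‖ ≤ L * ‖u - y i‖)
    (hB : ∀ i ∈ I, w i ≤ B) (hM : ∀ i ∈ I, ‖z - y i‖ ≤ M) (hD : ∀ i ∈ I, ‖u - y i‖ ^ 2 ≤ D) :
    ∑ i, w i * ⟪g i, u - y i⟫ ≤
      ∑ i, w i * ⟪g i, u - z⟫ + I.card * (B * (L * (M ^ 2 + D))) := by
  have shift (i : ι) : w i * ⟪g i, u - y i⟫ = w i * ⟪g i, u - z⟫ + w i * ⟪g i, z - y i⟫ := by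
    rw [← mul_add, ← inner_add_right, sub_add_sub_cancel]
  have term_le (i : ι) (hi : i ∈ I) : w i * ⟪g i, z - y i⟫ ≤ B * (L * (M ^ 2 + D)) := by
    have inner_le : ⟪g i, z - y i⟫ ≤ L * (M ^ 2 + D) :=
      (real_inner_le_mul_sq_add_sq hL (hg i hi)).trans <| by
        gcongr
        exacts [hM i hi, hD i hi]
    have bound_nonneg : 0 ≤ L * (M ^ 2 + D) :=
      mul_nonneg hL (add_nonneg (sq_nonneg M) ((sq_nonneg _).trans (hD i hi)))
    exact (mul_le_mul_of_nonneg_left inner_le (hw i)).trans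
      (mul_le_mul_of_nonneg_right (hB i hi) bound_nonneg)
  have cross_eq : ∑ i, w i * ⟪g i, z - y i⟫ = ∑ i ∈ I, w i * ⟪g i, z - y i⟫ :=
    (Finset.sum_subset I.subset_univ fun i _ hi => by
      rw [hy i hi, sub_self, inner_zero_right, mul_zero]).symm
  rw [Finset.sum_congr rfl fun i _ => shift i, Finset.sum_add_distrib, cross_eq, ← nsmul_eq_mul]
  gcongr
  exact Finset.sum_le_card_nsmul I _ _ term_le

theorem norm_sub_smul_sum_smul_sub_sub_sq_le {a L B M D : ℝ} (ha : 0 ≤ a) (hL : 0 ≤ L)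
    (hw : ∀ i, 0 ≤ w i) {I : Finset ι} {u z : E} {y g : ι → E} (hy : ∀ i ∉ I, y i = z)
    (hg : ∀ i ∈ I, ‖g i‖ ≤ L * ‖u - y i‖) (hB : ∀ i ∈ I, w i ≤ B)
    (hM : ∀ i ∈ I, ‖z - y i‖ ≤ M) (hD : ∀ i ∈ I, ‖u - y i‖ ^ 2 ≤ D) (e : ι → E) :
    ‖u - a • ∑ i, w i • (g i - e i) - z‖ ^ 2 ≤
      ‖u - z‖ ^ 2 + 2 * a * ∑ i, w i * ⟪e i, u - z⟫
        + 2 * (∑ i, w i) * a ^ 2 * ∑ i, w i * ‖e i‖ ^ 2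
        + 2 * a * B * I.card * L * M ^ 2 + 2 * a * B * I.card * L * D
        - 2 * a * ∑ i, w i * (⟪g i, u - y i⟫ - (∑ i, w i) * a * ‖g i‖ ^ 2) := by
  have step := norm_sub_smul_sum_smul_sub_sq_le hw a (u - z) g e
  have move_base := mul_le_mul_of_nonneg_left (sum_mul_inner_sub_le hL hw hy hg hB hM hD)
    (mul_nonneg zero_le_two ha)
  rw [sub_right_comm]
  simp only [mul_sub (w _), Finset.sum_sub_distrib] at step ⊢
  linarith

end InnerProductSpace

theorem srdo_type2_error_bound_general
    {P S T E : Type*} [Fintype P] [Fintype S] [Fintype T]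
    [NormedAddCommGroup E] [InnerProductSpace ℝ E] [CompleteSpace E]
    {L : ℝ} (hL : 0 ≤ L) {f : P → E → ℝ} {gf : P → E → E}
    (hf : ∀ ι x, HasGradientAt (f ι) (gf ι x) x)
    {xstar : E} {xhat : P → E} {I : Finset P}
    (hgf : ∀ ι ∈ I, ∀ u, ‖gf ι u‖ ≤ L * ‖u - xhat ι‖) (hI : ∀ ι ∉ I, xhat ι = xstar)
    {γ₀ : ℝ} {γ : P → ℝ} (hγ : ∀ ι, 0 ≤ γ ι) (hγsum : γ₀ + ∑ ι, γ ι = 1)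
    {γmax M : ℝ} (hγmax : ∀ ι ∈ I, γ ι ≤ γmax) (hM : ∀ ι ∈ I, ‖xstar - xhat ι‖ ≤ M)
    {W : T → S → ℝ} (hW : ∀ l j, 0 ≤ W l j)
    (hWrow : ∀ l, ∑ j, W l j = 1) (hWcol : ∀ j, ∑ l, W l j ≤ 1)
    {α : ℝ} (hα : 0 ≤ α) {v : S → E} {D : S → ℝ} (hD : ∀ j, ∀ ι ∈ I, ‖v j - xhat ι‖ ^ 2 ≤ D j)
    {ε : S → P → E} {x : S → E}
    (hx : ∀ j, x j = γ₀ • v j + ∑ ι, γ ι • (v j - α • (gf ι (v j) - ε j ι)))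
    {v' : T → E} (hv' : ∀ l, v' l = ∑ j, W l j • x j) :
    ∑ l, ‖v' l - xstar‖ ^ 2 ≤
      ∑ j, ‖v j - xstar‖ ^ 2
      + 2 * α * (∑ j, ∑ ι, γ ι * ⟪ε j ι, v j - xstar⟫)
      + 2 * (1 - γ₀) * α ^ 2 * (∑ j, ∑ ι, γ ι * ‖ε j ι‖ ^ 2)
      + 2 * α * Fintype.card S * γmax * I.card * L * M ^ 2
      + 2 * α * γmax * I.card * L * (∑ j, D j)
      - 2 * α * (∑ j, ∑ ι, γ ι *
          (⟪gf ι (v j), v j - xhat ι⟫ - (1 - γ₀) * α * ‖gf ι (v j)‖ ^ 2)) := by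
  have server_step (j : S) := norm_sub_smul_sum_smul_sub_sub_sq_le hα hL hγ hI
    (fun ι hι => hgf ι hι (v j)) hγmax hM (hD j) (ε j)
  simp only [← smul_add_sum_smul_sub_smul hγsum, ← hx, eq_sub_of_add_eq' hγsum] at server_step
  calc ∑ l, ‖v' l - xstar‖ ^ 2
      ≤ ∑ j, ‖x j - xstar‖ ^ 2 := by
        simpa only [hv'] using sum_norm_sum_smul_sub_sq_le hW hWrow hWcol x xstar
    _ ≤ _ := Finset.sum_le_sum fun j _ => server_step j
    _ = _ := by
      simp only [Finset.sum_add_distrib, Finset.sum_sub_distrib, ← Finset.mul_sum,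
        Finset.sum_const, Finset.card_univ, nsmul_eq_mul]
      ring

/-- SRDO per-iteration error bound in the general case (Lemma `type2_error_bound`,
deterministic form): `x^ ι` is a minimizer of the partition function `f^ι`, `I` is the set of
partitions whose minimum value is strictly below `f^ι(x*)`, and `x^ ι = x*` off `I`. -/
theorem srdo_type2_error_bound
    {E : Type*} [NormedAddCommGroup E] [InnerProductSpace ℝ E] [CompleteSpace E]
    (p n : ℕ) (hp : 0 < p) (L : ℝ) (hL : 0 ≤ L)
    (f : Fin p → E → ℝ) (gf : Fin p → E → E)
    (hconv : ∀ ι, ConvexOn ℝ Set.univ (f ι))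
    (hf : ∀ ι x, HasGradientAt (f ι) (gf ι x) x)
    (hlip : ∀ ι u w, ‖gf ι u - gf ι w‖ ≤ L * ‖u - w‖)
    (xstar : E) (xhat : Fin p → E) (hxhat : ∀ ι, gf ι (xhat ι) = 0)
    (I : Finset (Fin p)) (hI : ∀ ι ∉ I, xhat ι = xstar)
    (γ₀ : ℝ) (γ : Fin p → ℝ) (hγ₀ : 0 ≤ γ₀) (hγ : ∀ ι, 0 ≤ γ ι)
    (hγsum : γ₀ + ∑ ι, γ ι = 1)
    (W : Fin n → Fin n → ℝ) (hW : ∀ i j, 0 ≤ W i j)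
    (hWrow : ∀ i, ∑ j, W i j = 1) (hWcol : ∀ j, ∑ i, W i j = 1)
    (α : ℝ) (hα : 0 ≤ α) (v : Fin n → E) (ε : Fin n → Fin p → E)
    (x : Fin n → E)
    (hx : ∀ j, x j = γ₀ • v j + ∑ ι, γ ι • (v j - α • (gf ι (v j) - ε j ι)))
    (v' : Fin n → E) (hv' : ∀ l, v' l = ∑ j, W l j • x j) :
    ∑ l, ‖v' l - xstar‖ ^ 2 ≤
      ∑ j, ‖v j - xstar‖ ^ 2
      + 2 * α * (∑ j, ∑ ι, γ ι * ⟪ε j ι, v j - xstar⟫)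
      + 2 * (1 - γ₀) * α ^ 2 * (∑ j, ∑ ι, γ ι * ‖ε j ι‖ ^ 2)
      + 2 * α * n * finMax hp γ * I.card * L * (finMax hp fun ι => ‖xstar - xhat ι‖) ^ 2
      + 2 * α * finMax hp γ * I.card * L *
          (∑ j, finMax hp fun ι => ‖v j - xhat ι‖ ^ 2)
      - 2 * α * (∑ j, ∑ ι, γ ι *
          (⟪gf ι (v j), v j - xhat ι⟫ - (1 - γ₀) * α * ‖gf ι (v j)‖ ^ 2)) := by
  have hgf (ι : Fin p) (u : E) : ‖gf ι u‖ ≤ L * ‖u - xhat ι‖ := by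
    simpa only [hxhat, sub_zero] using hlip ι u (xhat ι)
  simpa only [Fintype.card_fin] using srdo_type2_error_bound_general hL hf (fun ι _ => hgf ι) hI
    hγ hγsum (fun ι _ => le_finMax hp γ ι) (fun ι _ => le_finMax hp (‖xstar - xhat ·‖) ι)
    hW hWrow (fun j => (hWcol j).le) hα (fun j ι _ => le_finMax hp (‖v j - xhat ·‖ ^ 2) ι) hx hv'
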